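/- Let G:[0,∞)→(0,∞) be continuous and nondecreasing with ∫_r^∞ ds/G(s) = ∞ for some r>0. Then for every k ∈ ℕ there exists a smooth compactly supported function χ_k ∈ C_c^∞(ℝⁿ) with values in [0,1] such that χ_k = 1 on the ball B(0,k), χ_k = 0 outside B(0,R_k) for some finite R_k > k, and |∇χ_k(x)| ≤ 2/G(|x|) for all x ∈ ℝⁿ. -/

import Mathlib

open MeasureTheory Set

/-!
Choose a smooth `f` with `g / 2 < f < g`, where `g = c / G`, and an antiderivative `H` of `f`
vanishing at some `b > 0`. Composing `H` with a fixed smooth step `η` of slope at most `1` gives a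
profile `ψ = η ∘ H` with `|ψ'| ≤ f ≤ g`. Divergence of `∫ 1 / G` forces `H → ∞`, so `ψ`
does reach the value `0`. Then `χ x = ψ ‖x‖` is smooth at the origin because `ψ = 1` to the left of
`b`, and its gradient is controlled by `ψ'` because the norm is `1`-Lipschitz.
-/

open Filter Topology
open scoped ContDiff

theorem hasCompactSupport_deriv_smoothTransition :
    HasCompactSupport (deriv Real.smoothTransition) := by
  refine HasCompactSupport.intro (isCompact_Icc (a := (0 : ℝ)) (b := 1)) fun x hx => ?_
  rcases lt_or_ge x 0 with h_neg | h_nonneg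
  · have h_zero : Real.smoothTransition =ᶠ[𝓝 x] fun _ => 0 := by
      filter_upwards [Iio_mem_nhds h_neg] with y hy
      exact Real.smoothTransition.zero_of_nonpos (le_of_lt hy)
    rw [h_zero.deriv_eq, deriv_const]
  · have hx_gt : 1 < x := lt_of_not_ge fun hx_le => hx ⟨h_nonneg, hx_le⟩
    have h_one : Real.smoothTransition =ᶠ[𝓝 x] fun _ => 1 := by
      filter_upwards [Ioi_mem_nhds hx_gt] with y hy
      exact Real.smoothTransition.one_of_one_le (le_of_lt hy)
    rw [h_one.deriv_eq, deriv_const]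

theorem exists_contDiff_step_norm_deriv_le_one :
    ∃ η : ℝ → ℝ, ContDiff ℝ ∞ η ∧ (∀ u, η u ∈ Icc (0 : ℝ) 1) ∧ (∀ u ≤ 0, η u = 1) ∧
      (∀ᶠ u in atTop, η u = 0) ∧ ∀ u, ‖deriv η u‖ ≤ 1 := by
  obtain ⟨C, hC⟩ := hasCompactSupport_deriv_smoothTransition.exists_bound_of_continuous
    Real.smoothTransition.contDiff.continuous_deriv_one
  set L := max C 1
  have hL : 0 < L := lt_max_of_lt_right one_pos
  refine ⟨fun u => Real.smoothTransition (1 - u / L),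
    Real.smoothTransition.contDiff.comp (by fun_prop),
    fun u => ⟨Real.smoothTransition.nonneg _, Real.smoothTransition.le_one _⟩, fun u hu => ?_, ?_,
    fun u => ?_⟩
  · have : u / L ≤ 0 := div_nonpos_of_nonpos_of_nonneg hu hL.le
    exact Real.smoothTransition.one_of_one_le (by linarith)
  · filter_upwards [eventually_ge_atTop L] with u hu
    have : 1 ≤ u / L := (one_le_div hL).2 hu
    exact Real.smoothTransition.zero_of_nonpos (by linarith)
  · have h_inner : HasDerivAt (fun u => 1 - u / L) (-(1 / L)) u :=
      ((hasDerivAt_id u).div_const L).const_sub 1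
    have h_outer : DifferentiableAt ℝ Real.smoothTransition (1 - u / L) :=
      (Real.smoothTransition.contDiff (n := 1)).differentiable one_ne_zero _
    have h_comp : HasDerivAt (fun u => Real.smoothTransition (1 - u / L))
        (deriv Real.smoothTransition (1 - u / L) * -(1 / L)) u :=
      HasDerivAt.comp (h₂ := Real.smoothTransition) u h_outer.hasDerivAt h_inner
    rw [h_comp.deriv, norm_mul, norm_neg, Real.norm_of_nonneg (one_div_pos.2 hL).le, mul_one_div,
      div_le_one hL]
    exact (hC _).trans (le_max_left C 1)

theorem exists_contDiff_forall_mem_Ioo {E : Type*} [NormedAddCommGroup E] [NormedSpace ℝ E]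
    [FiniteDimensional ℝ E] {l u : E → ℝ} (hl : Continuous l) (hu : Continuous u)
    (hlu : ∀ x, l x < u x) :
    ∃ f : E → ℝ, ContDiff ℝ ∞ f ∧ ∀ x, f x ∈ Ioo (l x) (u x) := by
  obtain ⟨f, hf, hf_approx, -⟩ := Continuous.exists_contDiff_approx ⊤
    (f := fun x => (l x + u x) / 2) (ε := fun x => (u x - l x) / 2) (by fun_prop) (by fun_prop)
    fun x => half_pos (sub_pos.2 (hlu x))
  refine ⟨f, hf, fun x => ?_⟩
  have h_dist := abs_lt.1 (Real.dist_eq _ _ ▸ hf_approx x)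
  constructor <;> linarith

theorem exists_contDiff_hasDerivAt {F : Type*} [NormedAddCommGroup F] [NormedSpace ℝ F]
    [CompleteSpace F] {f : ℝ → F} (hf : ContDiff ℝ ∞ f) (a : ℝ) :
    ∃ H : ℝ → F, ContDiff ℝ ∞ H ∧ H a = 0 ∧ ∀ t, HasDerivAt H (f t) t := by
  have hH : ∀ t, HasDerivAt (fun t => ∫ s in a..t, f s) (f t) t :=
    fun t => (hf.continuous.integral_hasStrictDerivAt a t).hasDerivAt
  refine ⟨fun t => ∫ s in a..t, f s, ?_, intervalIntegral.integral_same, hH⟩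
  rw [contDiff_infty_iff_deriv, deriv_eq hH]
  exact ⟨fun t => (hH t).differentiableAt, hf⟩

theorem tendsto_atTop_of_not_integrableAtFilter_deriv {H H' : ℝ → ℝ}
    (hH : ∀ t, HasDerivAt H (H' t) t) (hH' : ∀ t, 0 ≤ H' t)
    (h_div : ¬ IntegrableAtFilter H' atTop) : Tendsto H atTop atTop := by
  refine (tendsto_atTop_of_monotone (monotone_of_hasDerivAt_nonneg hH hH')).resolve_right ?_
  rintro ⟨l, hl⟩
  exact h_div ⟨Ioi 0, Ioi_mem_atTop 0,
    integrableOn_Ioi_deriv_of_nonneg' (fun t _ => hH t) (fun t _ => hH' t) hl⟩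

theorem exists_contDiff_cutoff_norm_deriv_le {g : ℝ → ℝ} (hg : Continuous g)
    (hg_pos : ∀ t, 0 < g t) (hg_div : ¬ IntegrableAtFilter g atTop) (a : ℝ) :
    ∃ ψ : ℝ → ℝ, ContDiff ℝ ∞ ψ ∧ (∀ t, ψ t ∈ Icc (0 : ℝ) 1) ∧ (∀ t ≤ a, ψ t = 1) ∧
      (∀ᶠ t in atTop, ψ t = 0) ∧ ∀ t, ‖deriv ψ t‖ ≤ g t := by
  obtain ⟨f, hf, hfg⟩ := exists_contDiff_forall_mem_Ioo (hg.div_const 2) hg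
    fun t => half_lt_self (hg_pos t)
  have hf_nonneg : ∀ t, 0 ≤ f t := fun t => (half_pos (hg_pos t)).le.trans (hfg t).1.le
  have hf_div : ¬ IntegrableAtFilter f atTop := by
    have h_bigO : g =O[atTop] f := .of_bound 2 <| .of_forall fun t => by
      rw [Real.norm_of_nonneg (hg_pos t).le, Real.norm_of_nonneg (hf_nonneg t)]
      linarith [(hfg t).1]
    exact fun h => hg_div (h_bigO.integrableAtFilter (hg.stronglyMeasurableAtFilter _ _) h)
  obtain ⟨H, hH_smooth, hHa, hH⟩ := exists_contDiff_hasDerivAt hf a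
  have hH_mono : Monotone H := monotone_of_hasDerivAt_nonneg hH hf_nonneg
  have hH_top : Tendsto H atTop atTop :=
    tendsto_atTop_of_not_integrableAtFilter_deriv hH hf_nonneg hf_div
  obtain ⟨η, hη, hη_mem, hη_one, hη_zero, hη_deriv⟩ := exists_contDiff_step_norm_deriv_le_one
  refine ⟨η ∘ H, hη.comp hH_smooth, fun t => hη_mem _, fun t ht => hη_one _ (hHa ▸ hH_mono ht),
    hH_top.eventually hη_zero, fun t => ?_⟩
  have hη_diff : DifferentiableAt ℝ η (H t) := hη.differentiable (by simp) _
  calc ‖deriv (η ∘ H) t‖ = ‖deriv η (H t)‖ * f t := by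
        rw [(hη_diff.hasDerivAt.comp t (hH t)).deriv, norm_mul, Real.norm_of_nonneg (hf_nonneg t)]
    _ ≤ f t := mul_le_of_le_one_left (hf_nonneg t) (hη_deriv _)
    _ ≤ g t := (hfg t).2.le

theorem contDiff_comp_norm_of_eq_const {E F : Type*} [NormedAddCommGroup E]
    [InnerProductSpace ℝ E] [NormedAddCommGroup F] [NormedSpace ℝ F] {n : WithTop ℕ∞}
    {ψ : ℝ → F} (hψ : ContDiff ℝ n ψ) {b : ℝ} (hb : 0 < b) {y : F} (hψ_const : ∀ t ≤ b, ψ t = y) :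
    ContDiff ℝ n fun x : E => ψ ‖x‖ := by
  refine contDiff_iff_contDiffAt.2 fun x => ?_
  rcases eq_or_ne x 0 with rfl | hx
  · have h_const : (fun x : E => ψ ‖x‖) =ᶠ[𝓝 0] fun _ => y := by
      filter_upwards [Metric.ball_mem_nhds 0 hb] with z hz
      exact hψ_const _ (mem_ball_zero_iff.1 hz).le
    exact contDiffAt_const.congr_of_eventuallyEq h_const
  · exact hψ.contDiffAt.comp x (contDiffAt_norm ℝ hx)

theorem norm_fderiv_comp_norm_le {E F : Type*} [NormedAddCommGroup E] [NormedSpace ℝ E]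
    [NormedAddCommGroup F] [NormedSpace ℝ F] {ψ : ℝ → F} {x : E}
    (hψ : DifferentiableAt ℝ ψ ‖x‖) :
    ‖fderiv ℝ (fun y : E => ψ ‖y‖) x‖ ≤ ‖deriv ψ ‖x‖‖ := by
  -- The norm need not be differentiable at `x`, so bound difference quotients instead of using
  -- the chain rule.
  refine le_of_forall_gt_imp_ge_of_dense fun C hC => ?_
  have hC_nonneg : 0 ≤ C := (norm_nonneg _).trans hC.le
  have h_lip : ∀ᶠ t in 𝓝 ‖x‖, ‖ψ t - ψ ‖x‖‖ ≤ C * ‖t - ‖x‖‖ := by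
    have h_slope := hψ.hasDerivAt.hasDerivWithinAt.limsup_norm_slope_le (s := univ) hC
    filter_upwards [nhdsWithin_univ ‖x‖ ▸ h_slope] with t ht
    rcases eq_or_ne t ‖x‖ with rfl | hne
    · simp
    · have h_pos : 0 < ‖t - ‖x‖‖ := norm_pos_iff.2 (sub_ne_zero.2 hne)
      exact (inv_mul_le_iff₀' h_pos).1 ht.le
  refine norm_fderiv_le_of_lip' ℝ hC_nonneg ?_
  filter_upwards [continuous_norm.continuousAt.eventually h_lip] with y hy
  exact hy.trans (mul_le_mul_of_nonneg_left (abs_norm_sub_norm_le y x) hC_nonneg)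

theorem stmt1_general {E : Type*} [NormedAddCommGroup E] [InnerProductSpace ℝ E] [ProperSpace E]
    {G : ℝ → ℝ} (hG_pos : ∀ s, 0 ≤ s → 0 < G s) (hG_cont : ContinuousOn G (Ici 0))
    {r : ℝ} (hr : 0 ≤ r) (hdiv : ¬ IntegrableOn (fun s => 1 / G s) (Ioi r))
    {c : ℝ} (hc : 0 < c) (a : ℝ) :
    ∃ χ : E → ℝ,
      ContDiff ℝ ∞ χ ∧ HasCompactSupport χ ∧
      (∀ x, χ x ∈ Icc (0 : ℝ) 1) ∧
      (∀ x, ‖x‖ ≤ a → χ x = 1) ∧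
      (∃ R : ℝ, a < R ∧ ∀ x, R ≤ ‖x‖ → χ x = 0) ∧
      (∀ x, ‖fderiv ℝ χ x‖ ≤ c / G ‖x‖) := by
  set g : ℝ → ℝ := fun s => c / G (max s 0)
  have hG_max : ∀ s, 0 < G (max s 0) := fun s => hG_pos _ (le_max_right s 0)
  have hg_pos : ∀ s, 0 < g s := fun s => div_pos hc (hG_max s)
  have hg_cont : Continuous g := continuous_const.div
    (hG_cont.comp_continuous (by fun_prop) fun s => le_max_right s 0) fun s => (hG_max s).ne'
  have hg_div : ¬ IntegrableAtFilter g atTop := fun h => by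
    have hg_int : IntegrableOn g (Ici r) := integrableOn_Ici_iff_integrableAtFilter_atTop.2
      ⟨h, hg_cont.locallyIntegrable.locallyIntegrableOn _⟩
    refine hdiv (IntegrableOn.congr_fun
      ((hg_int.mono_set Ioi_subset_Ici_self).const_mul c⁻¹) (fun s hs => ?_) measurableSet_Ioi)
    simp only [g, max_eq_left (hr.trans (le_of_lt hs))]
    field_simp
  obtain ⟨ψ, hψ, hψ_mem, hψ_one, hψ_zero, hψ_deriv⟩ :=
    exists_contDiff_cutoff_norm_deriv_le hg_cont hg_pos hg_div (max a 1)
  obtain ⟨R, hR⟩ := eventually_atTop.1 hψ_zero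
  refine ⟨fun x => ψ ‖x‖, contDiff_comp_norm_of_eq_const hψ (lt_max_of_lt_right one_pos) hψ_one,
    .intro (isCompact_closedBall (0 : E) R) fun x hx => ?_, fun x => hψ_mem _,
    fun x hx => hψ_one _ (le_max_of_le_left hx),
    ⟨max R (a + 1), lt_max_of_lt_right (lt_add_one a), fun x hx => hR _ (le_of_max_le_left hx)⟩,
    fun x => ?_⟩
  · exact hR _ (not_le.1 (mt mem_closedBall_zero_iff.2 hx)).le
  · calc ‖fderiv ℝ (fun y : E => ψ ‖y‖) x‖ ≤ ‖deriv ψ ‖x‖‖ :=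
          norm_fderiv_comp_norm_le (hψ.differentiable (by simp) _)
      _ ≤ g ‖x‖ := hψ_deriv _
      _ = c / G ‖x‖ := by simp only [g, max_eq_left (norm_nonneg x)]

theorem stmt1 (n : ℕ) (G : ℝ → ℝ)
    (hGpos : ∀ s, 0 ≤ s → 0 < G s) (hGcont : Continuous G) (hGmono : Monotone G)
    (r : ℝ) (hr : 0 < r)
    (hdiv : ¬ IntegrableOn (fun s => 1 / G s) (Ioi r)) (k : ℕ) :
    ∃ χ : EuclideanSpace ℝ (Fin n) → ℝ,
      ContDiff ℝ (⊤ : ℕ∞) χ ∧ HasCompactSupport χ ∧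
      (∀ x, χ x ∈ Icc (0:ℝ) 1) ∧
      (∀ x, ‖x‖ ≤ (k:ℝ) → χ x = 1) ∧
      (∃ R : ℝ, (k:ℝ) < R ∧ ∀ x, R ≤ ‖x‖ → χ x = 0) ∧
      (∀ x, ‖fderiv ℝ χ x‖ ≤ 2 / G ‖x‖) :=
  stmt1_general hGpos hGcont.continuousOn hr.le hdiv two_pos k
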